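/- arXiv:1210.6430 — 2 statements merged into one kernel-verified Lean document; each statement's English description precedes it below -/
import Mathlib

section
/- The matrix π₂ satisfies the orthogonality relations defining A_q(B₃): for all 1 ≤ i,m ≤ 7 one has Σ_{j,k,l=1}^{7} C_{jk} C_{lm} π₂(t_{ij}) ∘ π₂(t_{lk}) = δ_{i,m}·id_F and Σ_{j,k,l=1}^{7} C_{ij} C_{kl} π₂(t_{kj}) ∘ π₂(t_{lm}) = δ_{i,m}·id_F as operators on F. -/
open TensorProduct

noncomputable section

abbrev Fq : Type := RatFunc ℚ

def q : Fq := RatFunc.X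

abbrev F : Type := ℕ →₀ Fq

def ket (m : ℕ) : F := Finsupp.single m 1

/-- Linear operator on the Fock space from its action on the basis. -/
def opOf (v : ℕ → F) : F →ₗ[Fq] F := Finsupp.lift F Fq ℕ v

/-- q²-oscillator K -/
def K2 : F →ₗ[Fq] F := opOf fun m => q ^ (2 * m) • ket m
/-- q²-oscillator A⁺ -/
def Ap : F →ₗ[Fq] F := opOf fun m => ket (m + 1)
/-- q²-oscillator A⁻ -/
def Am : F →ₗ[Fq] F := opOf fun m => (1 - q ^ (4 * m)) • ket (m - 1)
/-- q-oscillator k -/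
def kk : F →ₗ[Fq] F := opOf fun m => q ^ m • ket m
/-- q-oscillator a⁺ -/
def ap : F →ₗ[Fq] F := opOf fun m => ket (m + 1)
/-- q-oscillator a⁻ -/
def am : F →ₗ[Fq] F := opOf fun m => (1 - q ^ (2 * m)) • ket (m - 1)

def pi1 (α β μ ν κ σ : Fq) : Matrix (Fin 7) (Fin 7) (F →ₗ[Fq] F) :=
  !![μ • Am, α • K2, 0, 0, 0, 0, 0;
     β • K2, ν • Ap, 0, 0, 0, 0, 0;
     0, 0, κ • LinearMap.id, 0, 0, 0, 0;
     0, 0, 0, σ • LinearMap.id, 0, 0, 0;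
     0, 0, 0, 0, κ⁻¹ • LinearMap.id, 0, 0;
     0, 0, 0, 0, 0, ν⁻¹ • Am, (q ^ 2 * β⁻¹) • K2;
     0, 0, 0, 0, 0, (q ^ 2 * α⁻¹) • K2, μ⁻¹ • Ap]

def pi2 (α β μ ν κ σ : Fq) : Matrix (Fin 7) (Fin 7) (F →ₗ[Fq] F) :=
  !![κ • LinearMap.id, 0, 0, 0, 0, 0, 0;
     0, μ • Am, α • K2, 0, 0, 0, 0;
     0, β • K2, ν • Ap, 0, 0, 0, 0;
     0, 0, 0, σ • LinearMap.id, 0, 0, 0;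
     0, 0, 0, 0, ν⁻¹ • Am, (q ^ 2 * β⁻¹) • K2, 0;
     0, 0, 0, 0, (q ^ 2 * α⁻¹) • K2, μ⁻¹ • Ap, 0;
     0, 0, 0, 0, 0, 0, κ⁻¹ • LinearMap.id]

def pi3 (α μ κa κb : Fq) : Matrix (Fin 7) (Fin 7) (F →ₗ[Fq] F) :=
  !![κa • LinearMap.id, 0, 0, 0, 0, 0, 0;
     0, κb • LinearMap.id, 0, 0, 0, 0, 0;
     0, 0, μ • (am ∘ₗ am), α • (kk ∘ₗ am), (-((1 + q ^ 2) * μ)⁻¹ * α ^ 2) • (kk ∘ₗ kk), 0, 0;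
     0, 0, (-(1 + q ^ 2) * α⁻¹ * μ) • (am ∘ₗ kk), am ∘ₗ ap - kk ∘ₗ kk, (-(q * μ)⁻¹ * α) • (kk ∘ₗ ap), 0, 0;
     0, 0, (-(1 + q ^ 2) * q ^ 2 * α⁻¹ ^ 2 * μ) • (kk ∘ₗ kk), ((1 + q ^ 2) * α⁻¹) • (kk ∘ₗ ap), μ⁻¹ • (ap ∘ₗ ap), 0, 0;
     0, 0, 0, 0, 0, κb⁻¹ • LinearMap.id, 0;
     0, 0, 0, 0, 0, 0, κa⁻¹ • LinearMap.id]

def rhoB : Fin 7 → ℤ := ![5, 3, 1, 0, -1, -3, -5]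

def CB : Matrix (Fin 7) (Fin 7) Fq := fun i j => if (i : ℕ) + (j : ℕ) = 6 then q ^ rhoB j else 0

/-!
Put `S = C Tᵗ C`, where `T = π₂` and `Tᵗ` is the entrywise transpose. As the entries of `C` are
scalars, the two families of relations say precisely that `T * S = 1` and `S * T = 1`. Now `T` is
block diagonal with blocks of sizes 1, 2, 1, 2, 1, and since `C` is antidiagonal, passing to `S`
reverses the order of the blocks and turns each 2 × 2 block
`!![w, x; y, z]` into `!![z, q⁻² x; q² y, w]`. The relations therefore decouple: `κ` meets `κ⁻¹`,
`σ` meets itself, and each 2 × 2 block of `T` meets the twist of the other one, which inverts it by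
the oscillator relations. The parameters of the lower block arise from those of the upper block by
the involution `(α, β, μ, ν) ↦ (q² β⁻¹, q² α⁻¹, ν⁻¹, μ⁻¹)`, so only one block has to be computed.
-/

section Contragredient

variable {R A n : Type*} [Fintype n]

/-- The matrix `C Tᵗ C` for a matrix `C` of scalars and a matrix `T` over a noncommutative algebra,
where `Tᵗ` is the entrywise transpose. When the entries of `T` satisfy the relations of a quantum
group of type B or D with form `C`, this is the image of `T` under the antipode. -/
def contragredient [Semiring R] [AddCommMonoid A] [Module R A] (C : Matrix n n R)
    (T : Matrix n n A) : Matrix n n A :=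
  Matrix.of fun i j => ∑ k, ∑ l, (C i k * C l j) • T l k

variable [CommSemiring R] [Semiring A] [Algebra R A]

lemma mul_contragredient_apply (C : Matrix n n R) (T : Matrix n n A) (i m : n) :
    (T * contragredient C T) i m =
      ∑ j, ∑ k, ∑ l, (C j k * C l m) • (T i j * T l k) := by
  simp only [Matrix.mul_apply, contragredient, Matrix.of_apply, Finset.mul_sum, mul_smul_comm]

lemma contragredient_mul_apply (C : Matrix n n R) (T : Matrix n n A) (i m : n) :
    (contragredient C T * T) i m =
      ∑ j, ∑ k, ∑ l, (C i j * C k l) • (T k j * T l m) := by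
  simp only [Matrix.mul_apply, contragredient, Matrix.of_apply, Finset.sum_mul, smul_mul_assoc]
  rw [Finset.sum_comm]
  exact Finset.sum_congr rfl fun j _ => Finset.sum_comm

end Contragredient

lemma contragredient_apply_of_antidiagonal {R A : Type*} [Semiring R] [AddCommMonoid A]
    [Module R A] {n : ℕ} {C : Matrix (Fin n) (Fin n) R} {c : Fin n → R}
    (hC : ∀ i j, C i j = if j = i.rev then c j else 0) (T : Matrix (Fin n) (Fin n) A)
    (i j : Fin n) :
    contragredient C T i j = (c i.rev * c j) • T j.rev i.rev := by
  have hrev (l : Fin n) : j = l.rev ↔ l = j.rev := by rw [eq_comm, Fin.rev_eq_iff]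
  simp [contragredient, hC, hrev, ite_smul]

lemma q_ne_zero : q ≠ 0 := RatFunc.X_ne_zero

lemma CB_apply (i j : Fin 7) : CB i j = if j = i.rev then q ^ rhoB j else 0 := by
  have hrev : (i : ℕ) + j = 6 ↔ j = i.rev := by
    rw [Fin.ext_iff, Fin.val_rev]
    omega
  simp only [CB, hrev]

lemma rhoB_rev (i : Fin 7) : rhoB i.rev = -rhoB i := by
  fin_cases i <;> rfl

lemma contragredient_CB_apply {A : Type*} [AddCommMonoid A] [Module Fq A]
    (T : Matrix (Fin 7) (Fin 7) A) (i j : Fin 7) :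
    contragredient CB T i j = q ^ (rhoB j - rhoB i) • T j.rev i.rev := by
  rw [contragredient_apply_of_antidiagonal CB_apply, rhoB_rev, ← zpow_add₀ q_ne_zero,
    neg_add_eq_sub]

/-- The 7 × 7 block diagonal matrix with diagonal blocks `a`, `B`, `c`, `D`, `e` of sizes
1, 2, 1, 2, 1. -/
def blockDiag12121 {A : Type*} [Zero A] (a : A) (B : Matrix (Fin 2) (Fin 2) A) (c : A)
    (D : Matrix (Fin 2) (Fin 2) A) (e : A) : Matrix (Fin 7) (Fin 7) A :=
  !![a, 0, 0, 0, 0, 0, 0;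
     0, B 0 0, B 0 1, 0, 0, 0, 0;
     0, B 1 0, B 1 1, 0, 0, 0, 0;
     0, 0, 0, c, 0, 0, 0;
     0, 0, 0, 0, D 0 0, D 0 1, 0;
     0, 0, 0, 0, D 1 0, D 1 1, 0;
     0, 0, 0, 0, 0, 0, e]

lemma blockDiag12121_one {A : Type*} [Zero A] [One A] :
    blockDiag12121 (1 : A) 1 1 1 1 = 1 := by
  ext i j
  fin_cases i <;> fin_cases j <;> rfl

lemma blockDiag12121_mul {A : Type*} [NonUnitalNonAssocSemiring A] (a c e a' c' e' : A)
    (B D B' D' : Matrix (Fin 2) (Fin 2) A) :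
    blockDiag12121 a B c D e * blockDiag12121 a' B' c' D' e' =
      blockDiag12121 (a * a') (B * B') (c * c') (D * D') (e * e') := by
  ext i j
  fin_cases i <;> fin_cases j <;>
    simp [blockDiag12121, Matrix.mul_apply, Fin.sum_univ_succ]

/-- The 2 × 2 counterpart of `contragredient CB`: the transpose of `B` along the antidiagonal, with
off-diagonal entries rescaled by `p⁻¹` and `p`. -/
def twistedAntitranspose {𝕜 A : Type*} [Inv 𝕜] [SMul 𝕜 A] (p : 𝕜) (B : Matrix (Fin 2) (Fin 2) A) :
    Matrix (Fin 2) (Fin 2) A :=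
  !![B 1 1, p⁻¹ • B 0 1; p • B 1 0, B 0 0]

lemma contragredient_CB_blockDiag12121 {A : Type*} [AddCommMonoid A] [Module Fq A] (a c e : A)
    (B D : Matrix (Fin 2) (Fin 2) A) :
    contragredient CB (blockDiag12121 a B c D e) =
      blockDiag12121 e (twistedAntitranspose (q ^ 2) D) c (twistedAntitranspose (q ^ 2) B) a := by
  ext i j
  rw [contragredient_CB_apply]
  fin_cases i <;> fin_cases j <;>
    simp [blockDiag12121, twistedAntitranspose, rhoB, Fin.rev]

/-- The relations of the `p`-oscillator algebra between `K = p ^ N`, where `N` is the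
number operator, the creation operator `c` and the annihilation operator `a`. -/
structure IsQOscillator {𝕜 A : Type*} [CommSemiring 𝕜] [Ring A] [Algebra 𝕜 A] (p : 𝕜)
    (K c a : A) : Prop where
  K_mul_c : K * c = p • (c * K)
  a_mul_K : a * K = p • (K * a)
  c_mul_a : c * a = 1 - K * K
  a_mul_c : a * c = 1 - p ^ 2 • (K * K)

/-- The 2 × 2 matrix of oscillator operators that is the upper 2 × 2 diagonal block of `pi2`. -/
def oscillatorBlock {𝕜 A : Type*} [SMul 𝕜 A] (K c a : A) (α β μ ν : 𝕜) :
    Matrix (Fin 2) (Fin 2) A :=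
  !![μ • a, α • K; β • K, ν • c]

/-- The oscillator block with the dual parameters `(p β⁻¹, p α⁻¹, ν⁻¹, μ⁻¹)`. For `p = q ^ 2` it is
the lower 2 × 2 diagonal block of `pi2`. -/
def dualOscillatorBlock {𝕜 A : Type*} [Field 𝕜] [SMul 𝕜 A] (p : 𝕜) (K c a : A) (α β μ ν : 𝕜) :
    Matrix (Fin 2) (Fin 2) A :=
  oscillatorBlock K c a (p * β⁻¹) (p * α⁻¹) ν⁻¹ μ⁻¹

section OscillatorBlock

variable {𝕜 A : Type*} [Field 𝕜] [Ring A] [Algebra 𝕜 A] {p α β μ ν : 𝕜} {K c a : A}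

lemma twistedAntitranspose_dualOscillatorBlock (hp : p ≠ 0) :
    twistedAntitranspose p (dualOscillatorBlock p K c a α β μ ν) =
      !![μ⁻¹ • c, β⁻¹ • K; (p ^ 2 * α⁻¹) • K, ν⁻¹ • a] := by
  simp [twistedAntitranspose, dualOscillatorBlock, oscillatorBlock, smul_smul, hp, pow_two,
    mul_assoc]

lemma dualOscillatorBlock_dual (hp : p ≠ 0) :
    dualOscillatorBlock p K c a (p * β⁻¹) (p * α⁻¹) ν⁻¹ μ⁻¹ = oscillatorBlock K c a α β μ ν := by
  simp [dualOscillatorBlock, mul_left_comm p, hp]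

lemma dual_parameter_relation (hα : α ≠ 0) (hβ : β ≠ 0) (hμ : μ ≠ 0) (hν : ν ≠ 0)
    (hrel : α * β = -p * (μ * ν)) : p * β⁻¹ * (p * α⁻¹) = -p * (ν⁻¹ * μ⁻¹) := by
  field_simp
  linear_combination p * hrel

variable (h : IsQOscillator p K c a) (hp : p ≠ 0) (hα : α ≠ 0) (hβ : β ≠ 0) (hμ : μ ≠ 0)
  (hν : ν ≠ 0) (hrel : α * β = -p * (μ * ν))

include h hp hα hβ hμ hν hrel

lemma oscillatorBlock_mul_twistedAntitranspose_dual :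
    oscillatorBlock K c a α β μ ν *
      twistedAntitranspose p (dualOscillatorBlock p K c a α β μ ν) = 1 := by
  have h₀₀ : α * (p ^ 2 * α⁻¹) = p ^ 2 := by field_simp
  have h₀₁ : μ * β⁻¹ * p + α * ν⁻¹ = 0 := by
    field_simp
    linear_combination hrel
  have h₁₀ : β * μ⁻¹ * p + ν * (p ^ 2 * α⁻¹) = 0 := by
    field_simp
    linear_combination p * hrel
  rw [twistedAntitranspose_dualOscillatorBlock hp, oscillatorBlock, Matrix.mul_fin_two,
    Matrix.one_fin_two]
  simp only [smul_mul_smul_comm, h.K_mul_c, h.a_mul_K, h.c_mul_a, h.a_mul_c, smul_smul,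
    ← add_smul, h₀₀, h₀₁, h₁₀, zero_smul]
  simp [hβ, hμ, hν]

lemma twistedAntitranspose_dual_mul_oscillatorBlock :
    twistedAntitranspose p (dualOscillatorBlock p K c a α β μ ν) *
      oscillatorBlock K c a α β μ ν = 1 := by
  have h₀₁ : μ⁻¹ * α + β⁻¹ * ν * p = 0 := by
    field_simp
    linear_combination hrel
  have h₁₀ : p ^ 2 * α⁻¹ * μ + ν⁻¹ * β * p = 0 := by
    field_simp
    linear_combination p * hrel
  rw [twistedAntitranspose_dualOscillatorBlock hp, oscillatorBlock, Matrix.mul_fin_two,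
    Matrix.one_fin_two]
  simp only [smul_mul_smul_comm, h.K_mul_c, h.a_mul_K, h.c_mul_a, h.a_mul_c, smul_smul,
    ← add_smul, h₀₁, h₁₀, zero_smul]
  simp [hα, hβ, hμ, hν]

lemma dualOscillatorBlock_mul_twistedAntitranspose :
    dualOscillatorBlock p K c a α β μ ν *
      twistedAntitranspose p (oscillatorBlock K c a α β μ ν) = 1 := by
  rw [← dualOscillatorBlock_dual hp]
  exact oscillatorBlock_mul_twistedAntitranspose_dual h hp (mul_ne_zero hp (inv_ne_zero hβ))
    (mul_ne_zero hp (inv_ne_zero hα)) (inv_ne_zero hν) (inv_ne_zero hμ)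
    (dual_parameter_relation hα hβ hμ hν hrel)

lemma twistedAntitranspose_mul_dualOscillatorBlock :
    twistedAntitranspose p (oscillatorBlock K c a α β μ ν) *
      dualOscillatorBlock p K c a α β μ ν = 1 := by
  rw [← dualOscillatorBlock_dual hp]
  exact twistedAntitranspose_dual_mul_oscillatorBlock h hp (mul_ne_zero hp (inv_ne_zero hβ))
    (mul_ne_zero hp (inv_ne_zero hα)) (inv_ne_zero hν) (inv_ne_zero hμ)
    (dual_parameter_relation hα hβ hμ hν hrel)

end OscillatorBlock

lemma opOf_ket (v : ℕ → F) (m : ℕ) : opOf v (ket m) = v m := by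
  simp [opOf, ket]

lemma fock_hom_ext {f g : F →ₗ[Fq] F} (h : ∀ m, f (ket m) = g (ket m)) : f = g :=
  Finsupp.lhom_ext' fun m => LinearMap.ext_ring (h m)

lemma K2_ket (m : ℕ) : K2 (ket m) = q ^ (2 * m) • ket m := opOf_ket _ m

lemma Ap_ket (m : ℕ) : Ap (ket m) = ket (m + 1) := opOf_ket _ m

lemma Am_ket_zero : Am (ket 0) = 0 := by
  simp [Am, opOf_ket]

lemma Am_ket_succ (m : ℕ) : Am (ket (m + 1)) = (1 - q ^ (4 * (m + 1))) • ket m := opOf_ket _ _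

lemma isQOscillator_fock : IsQOscillator (q ^ 2) K2 Ap Am where
  K_mul_c := fock_hom_ext fun m => by
    simp only [Module.End.mul_apply, LinearMap.smul_apply, K2_ket, Ap_ket, map_smul, smul_smul]
    ring_nf
  a_mul_K := fock_hom_ext fun m => by
    cases m with
    | zero => simp [K2_ket, Am_ket_zero]
    | succ m =>
      simp only [Module.End.mul_apply, LinearMap.smul_apply, K2_ket, Am_ket_succ, map_smul,
        smul_smul]
      ring_nf
  c_mul_a := fock_hom_ext fun m => by
    cases m with
    | zero => simp [K2_ket, Am_ket_zero]
    | succ m =>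
      simp only [Module.End.mul_apply, LinearMap.sub_apply, Module.End.one_apply, K2_ket, Ap_ket,
        Am_ket_succ, map_sub, map_smul, smul_smul, sub_smul, one_smul]
      ring_nf
  a_mul_c := fock_hom_ext fun m => by
    simp only [Module.End.mul_apply, LinearMap.sub_apply, LinearMap.smul_apply,
      Module.End.one_apply, K2_ket, Ap_ket, Am_ket_succ, map_smul, smul_smul, sub_smul, one_smul]
    ring_nf

lemma pi2_eq_blockDiag12121 (α β μ ν κ σ : Fq) :
    pi2 α β μ ν κ σ =
      blockDiag12121 (κ • 1) (oscillatorBlock K2 Ap Am α β μ ν) (σ • 1)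
        (dualOscillatorBlock (q ^ 2) K2 Ap Am α β μ ν) (κ⁻¹ • 1) :=
  rfl

section Pi2

variable {α β μ ν κ σ : Fq} (hα : α ≠ 0) (hβ : β ≠ 0) (hμ : μ ≠ 0) (hν : ν ≠ 0) (hκ : κ ≠ 0)
  (hrel : α * β = -q ^ 2 * (μ * ν)) (hσ : σ * σ = 1)

include hα hβ hμ hν hκ hrel hσ

lemma pi2_mul_contragredient :
    pi2 α β μ ν κ σ * contragredient CB (pi2 α β μ ν κ σ) = 1 := by
  have hq : q ^ 2 ≠ 0 := pow_ne_zero 2 q_ne_zero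
  rw [pi2_eq_blockDiag12121, contragredient_CB_blockDiag12121, blockDiag12121_mul,
    oscillatorBlock_mul_twistedAntitranspose_dual isQOscillator_fock hq hα hβ hμ hν hrel,
    dualOscillatorBlock_mul_twistedAntitranspose isQOscillator_fock hq hα hβ hμ hν hrel,
    ← blockDiag12121_one]
  simp only [smul_mul_smul_comm, mul_inv_cancel₀ hκ, inv_mul_cancel₀ hκ, hσ, mul_one, one_smul]

lemma contragredient_mul_pi2 :
    contragredient CB (pi2 α β μ ν κ σ) * pi2 α β μ ν κ σ = 1 := by
  have hq : q ^ 2 ≠ 0 := pow_ne_zero 2 q_ne_zero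
  rw [pi2_eq_blockDiag12121, contragredient_CB_blockDiag12121, blockDiag12121_mul,
    twistedAntitranspose_dual_mul_oscillatorBlock isQOscillator_fock hq hα hβ hμ hν hrel,
    twistedAntitranspose_mul_dualOscillatorBlock isQOscillator_fock hq hα hβ hμ hν hrel,
    ← blockDiag12121_one]
  simp only [smul_mul_smul_comm, mul_inv_cancel₀ hκ, inv_mul_cancel₀ hκ, hσ, mul_one, one_smul]

end Pi2

/-- the matrix π₂ satisfies the orthogonality relations defining A_q(B₃). -/
theorem pi2_orthogonality
    (α β μ ν κ σ : Fq) (hα : α ≠ 0) (hβ : β ≠ 0) (hμ : μ ≠ 0) (hν : ν ≠ 0)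
    (hκ : κ ≠ 0) (hσ0 : σ ≠ 0)
    (hrel : α * β = -q ^ 2 * (μ * ν)) (hσ : σ = 1 ∨ σ = -1) :
    ∀ i m : Fin 7,
      ((∑ j : Fin 7, ∑ k : Fin 7, ∑ l : Fin 7,
        (CB j k * CB l m) • (pi2 α β μ ν κ σ i j ∘ₗ pi2 α β μ ν κ σ l k))
        = if i = m then LinearMap.id else 0) ∧
      ((∑ j : Fin 7, ∑ k : Fin 7, ∑ l : Fin 7,
        (CB i j * CB k l) • (pi2 α β μ ν κ σ k j ∘ₗ pi2 α β μ ν κ σ l m))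
        = if i = m then LinearMap.id else 0) := by
  have hσσ : σ * σ = 1 := mul_self_eq_one_iff.mpr hσ
  intro i m
  constructor
  · refine (mul_contragredient_apply CB _ i m).symm.trans ?_
    rw [pi2_mul_contragredient hα hβ hμ hν hκ hrel hσσ, Matrix.one_apply, Module.End.one_eq_id]
  · refine (contragredient_mul_apply CB _ i m).symm.trans ?_
    rw [contragredient_mul_pi2 hα hβ hμ hν hκ hrel hσσ, Matrix.one_apply, Module.End.one_eq_id]
end
end

section
/- The matrix 𝒮 is an involution: for all a,b,c,i,j,k ∈ ℕ, Σ_{x,y,z∈ℕ} 𝒮^{abc}_{xyz} 𝒮^{xyz}_{ijk} = δ_{a,i} δ_{b,j} δ_{c,k} (the sum is finite since 𝒮^{abc}_{xyz} = 0 unless x+y = a+b and y+z = b+c). -/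
open TensorProduct

noncomputable section

/-- `(p)_n` for an integer `n`: `∏_{l=1}^{n}(1-p^l)` if `n ≥ 0`, and `0` if `n < 0`
(the latter convention makes the q-multinomial bracket below vanish, via multiplication
for a numerator index and via division by zero for a denominator index, whenever some
index is negative, as required). -/
def qfac (p : Fq) (n : ℤ) : Fq :=
  if 0 ≤ n then ∏ l ∈ Finset.range n.toNat, (1 - p ^ (l + 1)) else 0

/-- The matrix element 𝒮^{abc}_{ijk} (with λ = b - μ in the sum over λ + μ = b). -/
def Scoef (a b c i j k : ℕ) : Fq :=
  (if i + j = a + b then 1 else 0) * (if j + k = b + c then 1 else 0) *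
    ∑ μ ∈ Finset.range (b + 1),
      (-1 : Fq) ^ (b - μ) *
        q ^ (2 * (i : ℤ) * ((c : ℤ) - (j : ℤ)) + 2 * ((k : ℤ) + 1) * ((b : ℤ) - (μ : ℤ))
          + 2 * (μ : ℤ) * ((μ : ℤ) - (k : ℤ))) *
        ((qfac (q ^ 4) (i : ℤ) * qfac (q ^ 4) (j : ℤ) * qfac (q ^ 4) ((c : ℤ) + (μ : ℤ))) /
          (qfac (q ^ 4) (μ : ℤ) * qfac (q ^ 4) ((b : ℤ) - (μ : ℤ)) *
            qfac (q ^ 4) ((i : ℤ) - (μ : ℤ)) * qfac (q ^ 4) ((j : ℤ) - ((b : ℤ) - (μ : ℤ))) *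
            qfac (q ^ 4) (c : ℤ)))

/-!
On the threefold Fock space, with `k |m⟩ = t ^ m |m⟩`, `a⁺ |m⟩ = |m + 1⟩` and
`a⁻ |m⟩ = (1 - t ^ (2 * m)) |m - 1⟩`, put `X₁ = a⁺ ⊗ k ⊗ 1`, `X₃ = 1 ⊗ a⁺ ⊗ 1`,
`Y₁ = a⁺ ⊗ 1 ⊗ k + k ⊗ a⁺ ⊗ a⁻` and `Y₃ = a⁺ ⊗ 1 ⊗ a⁺ - t k ⊗ a⁺ ⊗ k`. Since
`|i, j, k⟩ = X₃ ^ j X₁ ^ i |0, 0, k⟩`, an operator intertwining the `X`s with given operators is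
determined by its values on the kets `|0, 0, k⟩`. The operator `S` with
`S |i, j, k⟩ = Y₃ ^ j Y₁ ^ i |0, 0, k⟩` turns `X₁, X₃` into `Y₁, Y₃`. The `X`s commute with the
`Y`s, so comparing on the kets `|0, 0, k⟩` shows that `S` also turns the `Y`s back into the `X`s.
Hence `S ^ 2` commutes with `X₁, X₃` and fixes every `|0, 0, k⟩`, that is, `S ^ 2 = 1`.

For `t = q ^ 2` the matrix of `S` is `𝒮`: each of `Y₁` and `Y₃` is a sum of two `t ^ 2`-commuting
terms, so the noncommutative `q`-binomial theorem expands
`t ^ (i * j) S |i, j, k⟩ = Y₁ ^ i Y₃ ^ j |0, 0, k⟩`.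
-/

section QCombinatorics

variable {R : Type*}

/-- The Gaussian binomial coefficient `[n choose m]_p`, defined through its Pascal recursion so that
it makes sense over any ring and vanishes for `m > n`. -/
def gaussBinom [CommSemiring R] (p : R) : ℕ → ℕ → R
  | _, 0 => 1
  | 0, _ + 1 => 0
  | n + 1, m + 1 => p ^ (m + 1) * gaussBinom p n (m + 1) + gaussBinom p n m

/-- The descending `p`-factorial `(1 - p ^ n) (1 - p ^ (n - 1)) ⋯ (1 - p ^ (n - m + 1))`, equal to
`(p)_n / (p)_{n - m}` for `m ≤ n`. The subtraction truncates, which makes it vanish for `m > n`. -/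
def qDescFactorial [CommRing R] (p : R) (n m : ℕ) : R :=
  ∏ l ∈ Finset.range m, (1 - p ^ (n - l))

@[simp]
lemma gaussBinom_zero_right [CommSemiring R] (p : R) (n : ℕ) : gaussBinom p n 0 = 1 := by
  cases n <;> rfl

@[simp]
lemma gaussBinom_eq_zero_of_lt [CommSemiring R] (p : R) {n m : ℕ} (h : n < m) :
    gaussBinom p n m = 0 := by
  induction n generalizing m with
  | zero => obtain ⟨m, rfl⟩ := Nat.exists_eq_succ_of_ne_zero h.ne'; rfl
  | succ n ih =>
    obtain ⟨m, rfl⟩ := Nat.exists_eq_succ_of_ne_zero (Nat.ne_zero_of_lt h)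
    simp [gaussBinom, ih (m := m) (by lia), ih (m := m + 1) (by lia)]

lemma pow_mul_pow_of_mul_eq_smul_mul {A : Type*} [CommSemiring R] [Semiring A] [Algebra R A]
    {p : R} {x y : A} (h : y * x = p • (x * y)) (m n : ℕ) :
    y ^ m * x ^ n = p ^ (m * n) • (x ^ n * y ^ m) := by
  have y_mul_pow (n : ℕ) : y * x ^ n = p ^ n • (x ^ n * y) := by
    induction n with
    | zero => simp
    | succ n ih =>
      rw [pow_succ, ← mul_assoc, ih, smul_mul_assoc, mul_assoc, h, mul_smul_comm, smul_smul,
        ← pow_succ, mul_assoc]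
  induction m with
  | zero => simp
  | succ m ih =>
    rw [pow_succ', mul_assoc, ih, mul_smul_comm, ← mul_assoc, y_mul_pow, smul_mul_assoc, smul_smul,
      ← pow_add, mul_assoc, ← pow_succ', Nat.succ_mul]

theorem add_pow_of_mul_eq_smul_mul {A : Type*} [CommSemiring R] [Semiring A] [Algebra R A]
    {p : R} {x y : A} (h : y * x = p • (x * y)) (n : ℕ) :
    (x + y) ^ n = ∑ m ∈ Finset.range (n + 1), gaussBinom p n m • (x ^ (n - m) * y ^ m) := by
  induction n with
  | zero => simp
  | succ n ih =>
    have mul_x (m : ℕ) (hm : m ∈ Finset.range (n + 1)) : x ^ (n - m) * y ^ m * x =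
        p ^ m • (x ^ (n + 1 - m) * y ^ m) := by
      have hm : m ≤ n := Finset.mem_range_succ_iff.mp hm
      have := pow_mul_pow_of_mul_eq_smul_mul h m 1
      rw [pow_one, mul_one] at this
      rw [mul_assoc, this, mul_smul_comm, ← mul_assoc, ← pow_succ, Nat.sub_add_comm hm]
    have sum_mul_x : (∑ m ∈ Finset.range (n + 1), gaussBinom p n m • (x ^ (n - m) * y ^ m)) * x =
        x ^ (n + 1) + ∑ m ∈ Finset.range (n + 1),
          (p ^ (m + 1) * gaussBinom p n (m + 1)) • (x ^ (n - m) * y ^ (m + 1)) := by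
      rw [Finset.sum_mul, Finset.sum_congr rfl fun m hm => by
        rw [smul_mul_assoc, mul_x m hm, smul_smul, mul_comm]]
      rw [Finset.sum_range_succ', Finset.sum_range_succ _ n,
        gaussBinom_eq_zero_of_lt p (Nat.lt_succ_self n)]
      simp [add_comm]
    have sum_mul_y : (∑ m ∈ Finset.range (n + 1), gaussBinom p n m • (x ^ (n - m) * y ^ m)) * y =
        ∑ m ∈ Finset.range (n + 1), gaussBinom p n m • (x ^ (n - m) * y ^ (m + 1)) := by
      simp only [Finset.sum_mul, smul_mul_assoc, mul_assoc, ← pow_succ]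
    rw [pow_succ, ih, mul_add, sum_mul_x, sum_mul_y, Finset.sum_range_succ' _ (n + 1), add_assoc,
      ← Finset.sum_add_distrib]
    simp [gaussBinom, add_smul, add_comm]

variable [CommRing R]

@[simp]
lemma qDescFactorial_zero_right (p : R) (n : ℕ) : qDescFactorial p n 0 = 1 := rfl

lemma qDescFactorial_succ_right (p : R) (n m : ℕ) :
    qDescFactorial p n (m + 1) = qDescFactorial p n m * (1 - p ^ (n - m)) :=
  Finset.prod_range_succ _ _

lemma qDescFactorial_succ_succ (p : R) (n m : ℕ) :
    qDescFactorial p (n + 1) (m + 1) = (1 - p ^ (n + 1)) * qDescFactorial p n m := by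
  simp [qDescFactorial, Finset.prod_range_succ', mul_comm]

@[simp]
lemma qDescFactorial_eq_zero_of_lt (p : R) {n m : ℕ} (h : n < m) : qDescFactorial p n m = 0 :=
  Finset.prod_eq_zero (Finset.mem_range.mpr h) (by simp)

lemma qDescFactorial_add (p : R) (n m l : ℕ) :
    qDescFactorial p n (m + l) = qDescFactorial p n m * qDescFactorial p (n - m) l := by
  simp only [qDescFactorial, Finset.prod_range_add, Nat.sub_sub]

lemma gaussBinom_mul_qDescFactorial_self (p : R) (n m : ℕ) :
    gaussBinom p n m * qDescFactorial p m m = qDescFactorial p n m := by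
  induction n generalizing m with
  | zero => cases m <;> simp
  | succ n ih =>
    cases m with
    | zero => simp
    | succ m =>
      calc gaussBinom p (n + 1) (m + 1) * qDescFactorial p (m + 1) (m + 1)
          = p ^ (m + 1) * (gaussBinom p n (m + 1) * qDescFactorial p (m + 1) (m + 1)) +
              (1 - p ^ (m + 1)) * (gaussBinom p n m * qDescFactorial p m m) := by
            rw [gaussBinom, qDescFactorial_succ_succ]; ring
        _ = (p ^ (m + 1) * (1 - p ^ (n - m)) + (1 - p ^ (m + 1))) * qDescFactorial p n m := by
            rw [ih, ih, qDescFactorial_succ_right]; ring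
        _ = qDescFactorial p (n + 1) (m + 1) := by
            rw [qDescFactorial_succ_succ]
            rcases le_or_gt m n with h | h
            · obtain ⟨d, rfl⟩ := Nat.exists_eq_add_of_le h
              simp only [Nat.add_sub_cancel_left]; ring
            · simp [h]

end QCombinatorics

section FockSpace

variable {R : Type*} [CommSemiring R]

variable (R) in
/-- The threefold tensor power of the Fock space, with basis the kets `|i, j, k⟩`. -/
abbrev Fock3 : Type _ := ℕ × ℕ × ℕ →₀ R

/-- The basis vector `|i, j, k⟩` of `Fock3 R`. -/
def ket3 (i j k : ℕ) : Fock3 R := Finsupp.single (i, j, k) 1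

/-- The operator on `Fock3 R` with prescribed values on the basis. -/
def opOfKet3 (v : ℕ → ℕ → ℕ → Fock3 R) : Module.End R (Fock3 R) :=
  Finsupp.linearCombination R fun n => v n.1 n.2.1 n.2.2

@[simp]
lemma opOfKet3_ket3 (v : ℕ → ℕ → ℕ → Fock3 R) (i j k : ℕ) :
    opOfKet3 v (ket3 i j k) = v i j k := by
  simp [opOfKet3, ket3]

lemma ket3_apply (i j k a b c : ℕ) :
    (ket3 i j k : Fock3 R) (a, b, c) = if a = i ∧ b = j ∧ c = k then 1 else 0 := by
  simp [ket3, Finsupp.single_apply, eq_comm]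

lemma end_ext_ket3 {f g : Module.End R (Fock3 R)}
    (h : ∀ i j k, f (ket3 i j k) = g (ket3 i j k)) : f = g :=
  Finsupp.lhom_ext' fun _ => LinearMap.ext_ring (h _ _ _)

lemma finsum_end_ket3_mul (f : Module.End R (Fock3 R)) (v : Fock3 R) (n : ℕ × ℕ × ℕ) :
    ∑ᶠ (x : ℕ) (y : ℕ) (z : ℕ), f (ket3 x y z) n * v (x, y, z) = f v n := by
  have hsupp : (Function.support fun m : ℕ × ℕ × ℕ => f (ket3 m.1 m.2.1 m.2.2) n * v m) ⊆
      ↑v.support :=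
    fun m hm => Finsupp.mem_support_iff.mpr (right_ne_zero_of_mul hm)
  rw [← finsum_curry₃ (fun m : ℕ × ℕ × ℕ => f (ket3 m.1 m.2.1 m.2.2) n * v m)
    (v.support.finite_toSet.subset hsupp), finsum_eq_sum_of_support_subset _ hsupp]
  conv_rhs => rw [← v.sum_single, Finsupp.sum, map_sum, Finsupp.finsetSum_apply]
  refine Finset.sum_congr rfl fun m _ => ?_
  rw [← Finsupp.smul_single_one, map_smul, Finsupp.smul_apply, smul_eq_mul, mul_comm]
  rfl

end FockSpace

section Intertwiner

variable {R : Type*} [CommRing R]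

/-- The oscillator operator `a⁺ ⊗ k ⊗ 1`. -/
def opAKI (t : R) : Module.End R (Fock3 R) := opOfKet3 fun i j k => t ^ j • ket3 (i + 1) j k

/-- The oscillator operator `1 ⊗ a⁺ ⊗ 1`. -/
def opIAI : Module.End R (Fock3 R) := opOfKet3 fun i j k => ket3 i (j + 1) k

/-- The oscillator operator `a⁺ ⊗ 1 ⊗ k`. -/
def opAIK (t : R) : Module.End R (Fock3 R) := opOfKet3 fun i j k => t ^ k • ket3 (i + 1) j k

/-- The oscillator operator `k ⊗ a⁺ ⊗ a⁻`. The factor `1 - t ^ (2 * k)` of `a⁻` vanishes exactly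
where `k - 1` truncates. -/
def opKAB (t : R) : Module.End R (Fock3 R) :=
  opOfKet3 fun i j k => (t ^ i * (1 - t ^ (2 * k))) • ket3 i (j + 1) (k - 1)

/-- The oscillator operator `a⁺ ⊗ 1 ⊗ a⁺`. -/
def opAIA : Module.End R (Fock3 R) := opOfKet3 fun i j k => ket3 (i + 1) j (k + 1)

/-- The oscillator operator `-t k ⊗ a⁺ ⊗ k`. -/
def opNegKAK (t : R) : Module.End R (Fock3 R) :=
  opOfKet3 fun i j k => (-t ^ (i + k + 1)) • ket3 i (j + 1) k

/-- The operator `a⁺ ⊗ 1 ⊗ k + k ⊗ a⁺ ⊗ a⁻` exchanged with `a⁺ ⊗ k ⊗ 1` by the matrix `𝒮`. -/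
def dualAKI (t : R) : Module.End R (Fock3 R) := opAIK t + opKAB t

/-- The operator `a⁺ ⊗ 1 ⊗ a⁺ - t k ⊗ a⁺ ⊗ k` exchanged with `1 ⊗ a⁺ ⊗ 1` by the matrix `𝒮`. -/
def dualIAI (t : R) : Module.End R (Fock3 R) := opAIA + opNegKAK t

@[simp]
lemma opAKI_ket3 (t : R) (i j k : ℕ) : opAKI t (ket3 i j k) = t ^ j • ket3 (i + 1) j k :=
  opOfKet3_ket3 _ i j k

@[simp]
lemma opIAI_ket3 (i j k : ℕ) : opIAI (ket3 i j k : Fock3 R) = ket3 i (j + 1) k :=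
  opOfKet3_ket3 _ i j k

@[simp]
lemma opAIK_ket3 (t : R) (i j k : ℕ) : opAIK t (ket3 i j k) = t ^ k • ket3 (i + 1) j k :=
  opOfKet3_ket3 _ i j k

@[simp]
lemma opKAB_ket3 (t : R) (i j k : ℕ) :
    opKAB t (ket3 i j k) = (t ^ i * (1 - t ^ (2 * k))) • ket3 i (j + 1) (k - 1) :=
  opOfKet3_ket3 _ i j k

@[simp]
lemma opAIA_ket3 (i j k : ℕ) : opAIA (ket3 i j k : Fock3 R) = ket3 (i + 1) j (k + 1) :=
  opOfKet3_ket3 _ i j k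

@[simp]
lemma opNegKAK_ket3 (t : R) (i j k : ℕ) :
    opNegKAK t (ket3 i j k) = (-t ^ (i + k + 1)) • ket3 i (j + 1) k :=
  opOfKet3_ket3 _ i j k

lemma dualAKI_ket3 (t : R) (i j k : ℕ) : dualAKI t (ket3 i j k) =
    t ^ k • ket3 (i + 1) j k + (t ^ i * (1 - t ^ (2 * k))) • ket3 i (j + 1) (k - 1) := by
  simp [dualAKI]

lemma dualIAI_ket3 (t : R) (i j k : ℕ) : dualIAI t (ket3 i j k) =
    ket3 (i + 1) j (k + 1) - t ^ (i + k + 1) • ket3 i (j + 1) k := by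
  simp [dualIAI, sub_eq_add_neg]

lemma dualAKI_mul_dualIAI (t : R) :
    dualAKI t * dualIAI t = t • (dualIAI t * dualAKI t) := by
  refine end_ext_ket3 fun i j k => ?_
  cases k <;>
    simp only [Module.End.mul_apply, LinearMap.smul_apply, dualAKI_ket3, dualIAI_ket3, map_add,
      map_sub, map_smul, Nat.add_sub_cancel] <;>
    module

lemma commute_dualAKI_opAKI (t : R) : Commute (dualAKI t) (opAKI t) := by
  refine end_ext_ket3 fun i j k => ?_
  simp only [Module.End.mul_apply, dualAKI_ket3, opAKI_ket3, map_add, map_smul]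
  module

lemma commute_dualAKI_opIAI (t : R) : Commute (dualAKI t) opIAI :=
  end_ext_ket3 fun i j k => by simp [dualAKI_ket3]

lemma commute_dualIAI_opAKI (t : R) : Commute (dualIAI t) (opAKI t) := by
  refine end_ext_ket3 fun i j k => ?_
  simp only [Module.End.mul_apply, dualIAI_ket3, opAKI_ket3, map_sub, map_smul]
  module

lemma commute_dualIAI_opIAI (t : R) : Commute (dualIAI t) opIAI :=
  end_ext_ket3 fun i j k => by simp [dualIAI_ket3]

lemma opAKI_pow_ket3 (t : R) (n i j k : ℕ) :
    (opAKI t ^ n) (ket3 i j k) = t ^ (j * n) • ket3 (i + n) j k := by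
  induction n with
  | zero => simp
  | succ n ih => simp [pow_succ', ih, smul_smul, ← pow_add, add_assoc, mul_add]

lemma opIAI_pow_ket3 (n i j k : ℕ) :
    (opIAI ^ n) (ket3 i j k : Fock3 R) = ket3 i (j + n) k := by
  induction n with
  | zero => simp
  | succ n ih => simp [pow_succ', ih, add_assoc]

lemma opIAI_pow_mul_opAKI_pow_ket3 (t : R) (i j k : ℕ) :
    (opIAI ^ j * opAKI t ^ i : Module.End R (Fock3 R)) (ket3 0 0 k) = ket3 i j k := by
  simp [opAKI_pow_ket3, opIAI_pow_ket3]

lemma end_ext_of_semiconjBy {t : R} {f g u v : Module.End R (Fock3 R)}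
    (hfu : SemiconjBy f (opAKI t) u) (hfv : SemiconjBy f opIAI v)
    (hgu : SemiconjBy g (opAKI t) u) (hgv : SemiconjBy g opIAI v)
    (h : ∀ k, f (ket3 0 0 k) = g (ket3 0 0 k)) : f = g := by
  have apply_ket3 {f : Module.End R (Fock3 R)} (hu : SemiconjBy f (opAKI t) u)
      (hv : SemiconjBy f opIAI v) (i j k : ℕ) :
      f (ket3 i j k) = (v ^ j * u ^ i) (f (ket3 0 0 k)) := by
    rw [← opIAI_pow_mul_opAKI_pow_ket3 t, ← Module.End.mul_apply,
      ((hv.pow_right j).mul_right (hu.pow_right i)).eq, Module.End.mul_apply]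
  exact end_ext_ket3 fun i j k => by rw [apply_ket3 hfu hfv, apply_ket3 hgu hgv, h]

/-- The operator `𝒮` on `Fock3 R`, as the one that fixes the kets `|0, 0, k⟩` and intertwines
`opAKI t`, `opIAI` with `dualAKI t`, `dualIAI t`. -/
def opS (t : R) : Module.End R (Fock3 R) :=
  opOfKet3 fun i j k => (dualIAI t ^ j * dualAKI t ^ i) (ket3 0 0 k)

lemma opS_ket3 (t : R) (i j k : ℕ) :
    opS t (ket3 i j k) = (dualIAI t ^ j * dualAKI t ^ i) (ket3 0 0 k) :=
  opOfKet3_ket3 _ i j k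

lemma opS_ket3_zero_zero (t : R) (k : ℕ) : opS t (ket3 0 0 k) = ket3 0 0 k := by
  simp [opS_ket3]

lemma semiconjBy_opS_opAKI (t : R) : SemiconjBy (opS t) (opAKI t) (dualAKI t) := by
  refine end_ext_ket3 fun i j k => ?_
  have q_comm : dualAKI t * dualIAI t ^ j = t ^ j • (dualIAI t ^ j * dualAKI t) := by
    simpa using pow_mul_pow_of_mul_eq_smul_mul (dualAKI_mul_dualIAI t) 1 j
  calc (opS t * opAKI t) (ket3 i j k)
      = (t ^ j • (dualIAI t ^ j * dualAKI t) * dualAKI t ^ i) (ket3 0 0 k) := by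
        simp [opS_ket3, pow_succ']
    _ = (dualAKI t * opS t) (ket3 i j k) := by
        rw [← q_comm, Module.End.mul_apply (dualAKI t) (opS t), opS_ket3]
        rfl

lemma semiconjBy_opS_opIAI (t : R) : SemiconjBy (opS t) opIAI (dualIAI t) :=
  end_ext_ket3 fun i j k => by simp [opS_ket3, pow_succ']

lemma opS_ket3_one_zero (t : R) (k : ℕ) :
    opS t (ket3 1 0 k) = t ^ k • ket3 1 0 k + (1 - t ^ (2 * k)) • ket3 0 1 (k - 1) := by
  simp [opS_ket3, dualAKI_ket3]

lemma opS_ket3_zero_one (t : R) (k : ℕ) :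
    opS t (ket3 0 1 k) = ket3 1 0 (k + 1) - t ^ (k + 1) • ket3 0 1 k := by
  simp [opS_ket3, dualIAI_ket3]

lemma semiconjBy_opS_dualAKI (t : R) : SemiconjBy (opS t) (dualAKI t) (opAKI t) := by
  refine end_ext_of_semiconjBy
    ((semiconjBy_opS_opAKI t).mul_left (commute_dualAKI_opAKI t))
    ((semiconjBy_opS_opIAI t).mul_left (commute_dualAKI_opIAI t))
    (SemiconjBy.mul_left (commute_dualAKI_opAKI t).symm (semiconjBy_opS_opAKI t))
    (SemiconjBy.mul_left (commute_dualIAI_opAKI t).symm (semiconjBy_opS_opIAI t)) fun k => ?_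
  cases k <;>
    simp only [Module.End.mul_apply, dualAKI_ket3, opAKI_ket3, map_add, map_smul, zero_add,
      opS_ket3_zero_zero, opS_ket3_one_zero, opS_ket3_zero_one, Nat.add_sub_cancel] <;>
    module

lemma semiconjBy_opS_dualIAI (t : R) : SemiconjBy (opS t) (dualIAI t) opIAI := by
  refine end_ext_of_semiconjBy
    ((semiconjBy_opS_opAKI t).mul_left (commute_dualIAI_opAKI t))
    ((semiconjBy_opS_opIAI t).mul_left (commute_dualIAI_opIAI t))
    (SemiconjBy.mul_left (commute_dualAKI_opIAI t).symm (semiconjBy_opS_opAKI t))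
    (SemiconjBy.mul_left (commute_dualIAI_opIAI t).symm (semiconjBy_opS_opIAI t)) fun k => ?_
  simp only [Module.End.mul_apply, dualIAI_ket3, opIAI_ket3, map_sub, map_smul, zero_add,
    opS_ket3_zero_zero, opS_ket3_one_zero, opS_ket3_zero_one, Nat.add_sub_cancel]
  module

theorem opS_mul_self (t : R) : opS t * opS t = 1 :=
  end_ext_of_semiconjBy
    ((semiconjBy_opS_dualAKI t).mul_left (semiconjBy_opS_opAKI t))
    ((semiconjBy_opS_dualIAI t).mul_left (semiconjBy_opS_opIAI t))
    (.one_left _) (.one_left _) fun k => by simp [opS_ket3_zero_zero]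

lemma opAIK_pow_ket3 (t : R) (n i j k : ℕ) :
    (opAIK t ^ n) (ket3 i j k) = t ^ (k * n) • ket3 (i + n) j k := by
  induction n with
  | zero => simp
  | succ n ih => simp [pow_succ', ih, smul_smul, ← pow_add, add_assoc, mul_add]

lemma opKAB_pow_ket3 (t : R) (n i j k : ℕ) : (opKAB t ^ n) (ket3 i j k) =
    (t ^ (i * n) * qDescFactorial (t ^ 2) k n) • ket3 i (j + n) (k - n) := by
  induction n with
  | zero => simp
  | succ n ih =>
    rw [pow_succ', Module.End.mul_apply, ih, map_smul, opKAB_ket3, smul_smul,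
      qDescFactorial_succ_right, ← pow_mul, Nat.sub_sub, add_assoc]
    congr 1
    ring

lemma opAIA_pow_ket3 (n i j k : ℕ) :
    (opAIA ^ n) (ket3 i j k : Fock3 R) = ket3 (i + n) j (k + n) := by
  induction n with
  | zero => simp
  | succ n ih => simp [pow_succ', ih, add_assoc]

lemma opNegKAK_pow_ket3 (t : R) (n i j k : ℕ) : (opNegKAK t ^ n) (ket3 i j k) =
    ((-1) ^ n * t ^ ((i + k + 1) * n)) • ket3 i (j + n) k := by
  induction n with
  | zero => simp
  | succ n ih =>
    rw [pow_succ', Module.End.mul_apply, ih, map_smul, opNegKAK_ket3, smul_smul, add_assoc j]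
    congr 1
    ring

lemma opKAB_mul_opAIK (t : R) : opKAB t * opAIK t = t ^ 2 • (opAIK t * opKAB t) := by
  refine end_ext_ket3 fun i j k => ?_
  cases k <;>
    simp only [Module.End.mul_apply, LinearMap.smul_apply, opAIK_ket3, opKAB_ket3, map_smul,
      Nat.add_sub_cancel] <;>
    module

lemma opNegKAK_mul_opAIA (t : R) : opNegKAK t * opAIA = t ^ 2 • (opAIA * opNegKAK t) := by
  refine end_ext_ket3 fun i j k => ?_
  simp only [Module.End.mul_apply, LinearMap.smul_apply, opAIA_ket3, opNegKAK_ket3, map_smul]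
  module

lemma dualAKI_pow_ket3 (t : R) (n i j k : ℕ) :
    (dualAKI t ^ n) (ket3 i j k) = ∑ m ∈ Finset.range (n + 1),
      (gaussBinom (t ^ 2) n m * (t ^ (i * m) * qDescFactorial (t ^ 2) k m *
        t ^ ((k - m) * (n - m)))) • ket3 (i + (n - m)) (j + m) (k - m) := by
  rw [dualAKI, add_pow_of_mul_eq_smul_mul (opKAB_mul_opAIK t), LinearMap.sum_apply]
  simp only [LinearMap.smul_apply, Module.End.mul_apply, opKAB_pow_ket3, map_smul, opAIK_pow_ket3,
    smul_smul]

lemma dualIAI_pow_ket3 (t : R) (n i j k : ℕ) :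
    (dualIAI t ^ n) (ket3 i j k) = ∑ l ∈ Finset.range (n + 1),
      (gaussBinom (t ^ 2) n l * ((-1) ^ l * t ^ ((i + k + 1) * l))) •
        ket3 (i + (n - l)) (j + l) (k + (n - l)) := by
  rw [dualIAI, add_pow_of_mul_eq_smul_mul (opNegKAK_mul_opAIA t), LinearMap.sum_apply]
  simp only [LinearMap.smul_apply, Module.End.mul_apply, opNegKAK_pow_ket3, map_smul,
    opAIA_pow_ket3, smul_smul]

/-- The summand of `t ^ (i * j) * 𝒮^{abc}_{ijk}` with `m = μ` and `l = λ`, where `c` is replaced by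
its value `k + j - l - m` under the conservation laws. -/
def opSTerm (t : R) (i j k m l : ℕ) : R :=
  gaussBinom (t ^ 2) i m * gaussBinom (t ^ 2) j l * qDescFactorial (t ^ 2) (k + (j - l)) m *
    ((-1) ^ l * t ^ ((k + 1) * l + (j - l) * m + (k + (j - l) - m) * (i - m)))

lemma smul_opS_ket3 (t : R) (i j k : ℕ) :
    t ^ (i * j) • opS t (ket3 i j k) =
      ∑ m ∈ Finset.range (i + 1), ∑ l ∈ Finset.range (j + 1),
        opSTerm t i j k m l • ket3 (j - l + (i - m)) (l + m) (k + (j - l) - m) := by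
  have q_comm := pow_mul_pow_of_mul_eq_smul_mul (dualAKI_mul_dualIAI t) i j
  rw [opS_ket3, ← LinearMap.smul_apply, ← q_comm, Module.End.mul_apply, dualIAI_pow_ket3, map_sum,
    Finset.sum_comm]
  simp only [map_smul, dualAKI_pow_ket3, Finset.smul_sum, smul_smul, zero_add]
  refine Finset.sum_congr rfl fun l _ => Finset.sum_congr rfl fun m _ => ?_
  congr 1
  rw [opSTerm]
  ring

lemma opSTerm_eq_zero (t : R) {i j k m l : ℕ} (h : i < m ∨ j < l ∨ k + (j - l) < m) :
    opSTerm t i j k m l = 0 := by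
  rcases h with h | h | h <;> simp [opSTerm, h]

theorem pow_mul_opS_ket3_apply (t : R) (a b c i j k : ℕ) :
    t ^ (i * j) * opS t (ket3 i j k) (a, b, c) =
      if i + j = a + b ∧ j + k = b + c then
        ∑ n ∈ Finset.HasAntidiagonal.antidiagonal b, opSTerm t i j k n.1 n.2 else 0 := by
  rw [← smul_eq_mul, ← Finsupp.smul_apply, smul_opS_ket3, ← Finset.sum_product',
    Finsupp.finsetSum_apply]
  simp only [Finsupp.smul_apply, ket3_apply, smul_eq_mul, mul_ite, mul_one, mul_zero]
  split_ifs with conservation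
  · refine Finset.sum_congr_of_eq_on_inter ?_ ?_ ?_ <;> rintro ⟨m, l⟩ <;>
      simp only [Finset.mem_product, Finset.mem_range,
        Finset.HasAntidiagonal.mem_antidiagonal] <;>
      intro h h'
    · rw [if_neg (by lia)]
    · exact opSTerm_eq_zero t (by lia)
    · rcases lt_or_ge (k + (j - l)) m with hm | hm
      · rw [opSTerm_eq_zero t (.inr (.inr hm)), ite_self]
      · rw [if_pos (by lia)]
  · refine Finset.sum_eq_zero fun ⟨m, l⟩ h => ?_
    simp only [Finset.mem_product, Finset.mem_range] at h
    rcases lt_or_ge (k + (j - l)) m with hm | hm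
    · rw [opSTerm_eq_zero t (.inr (.inr hm)), ite_self]
    · rw [if_neg (by lia)]

end Intertwiner

lemma q_pow_ne_one {n : ℕ} (hn : n ≠ 0) : q ^ n ≠ 1 := by
  intro h
  rw [q, ← RatFunc.algebraMap_X, ← map_pow, ← map_one (algebraMap (Polynomial ℚ) (RatFunc ℚ))] at h
  simpa [hn] using congrArg Polynomial.natDegree (RatFunc.algebraMap_injective ℚ h)

lemma qfac_of_neg (p : Fq) {n : ℤ} (hn : n < 0) : qfac p n = 0 := if_neg hn.not_ge

lemma qfac_natCast (p : Fq) (n : ℕ) : qfac p n = qDescFactorial p n n := by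
  rw [qfac, if_pos n.cast_nonneg, Int.toNat_natCast, ← Finset.prod_range_reflect, qDescFactorial]
  refine Finset.prod_congr rfl fun l hl => ?_
  rw [Finset.mem_range] at hl
  congr 2
  lia

lemma qfac_natCast_ne_zero {p : Fq} (hp : ∀ n : ℕ, n ≠ 0 → p ^ n ≠ 1) (n : ℕ) :
    qfac p n ≠ 0 := by
  rw [qfac, if_pos n.cast_nonneg, Finset.prod_ne_zero_iff]
  exact fun l _ => sub_ne_zero.mpr (hp (l + 1) l.succ_ne_zero).symm

lemma qDescFactorial_eq_qfac_div {p : Fq} (hp : ∀ n : ℕ, n ≠ 0 → p ^ n ≠ 1) (n m : ℕ) :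
    qDescFactorial p n m = qfac p n / qfac p ((n : ℤ) - m) := by
  rcases lt_or_ge n m with h | h
  · rw [qDescFactorial_eq_zero_of_lt p h, qfac_of_neg p (sub_neg.mpr (Nat.cast_lt.mpr h)), div_zero]
  · rw [← Nat.cast_sub h, eq_div_iff (qfac_natCast_ne_zero hp _), qfac_natCast, qfac_natCast,
      ← qDescFactorial_add, Nat.add_sub_of_le h]

lemma gaussBinom_eq_qfac_div {p : Fq} (hp : ∀ n : ℕ, n ≠ 0 → p ^ n ≠ 1) (n m : ℕ) :
    gaussBinom p n m = qfac p n / (qfac p m * qfac p ((n : ℤ) - m)) := by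
  rw [mul_comm, ← div_div, ← qDescFactorial_eq_qfac_div hp, eq_div_iff (qfac_natCast_ne_zero hp m),
    qfac_natCast, gaussBinom_mul_qDescFactorial_self]

lemma qfac_bracket_eq {p : Fq} (hp : ∀ n : ℕ, n ≠ 0 → p ^ n ≠ 1) (i j c m l : ℕ) :
    qfac p i * qfac p j * qfac p ((c : ℤ) + m) /
        (qfac p m * qfac p l * qfac p ((i : ℤ) - m) * qfac p ((j : ℤ) - l) * qfac p c) =
      gaussBinom p i m * gaussBinom p j l * qDescFactorial p (c + m) m := by
  rw [gaussBinom_eq_qfac_div hp, gaussBinom_eq_qfac_div hp, qDescFactorial_eq_qfac_div hp,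
    Nat.cast_add, add_sub_cancel_right, div_mul_div_comm, div_mul_div_comm]
  congr 1
  ring

lemma pow_mul_Scoef_summand {c i j k m l : ℕ} (hjk : j + k = m + l + c) :
    (q ^ 2) ^ (i * j) *
      ((-1) ^ l * q ^ (2 * (i : ℤ) * ((c : ℤ) - j) + 2 * ((k : ℤ) + 1) * l
          + 2 * (m : ℤ) * ((m : ℤ) - k)) *
        (qfac (q ^ 4) i * qfac (q ^ 4) j * qfac (q ^ 4) ((c : ℤ) + m) /
          (qfac (q ^ 4) m * qfac (q ^ 4) l * qfac (q ^ 4) ((i : ℤ) - m) *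
            qfac (q ^ 4) ((j : ℤ) - l) * qfac (q ^ 4) c))) =
      opSTerm (q ^ 2) i j k m l := by
  have hp (n : ℕ) (hn : n ≠ 0) : (q ^ 4) ^ n ≠ 1 := by
    rw [← pow_mul]
    exact q_pow_ne_one (by lia)
  rw [qfac_bracket_eq hp, opSTerm, ← pow_mul q 2 2]
  rcases lt_or_ge i m with hi | hi
  · simp [hi]
  rcases lt_or_ge j l with hj | hj
  · simp [hj]
  have hc : k + (j - l) = c + m := by lia
  have pow_mul_zpow : (q ^ 2) ^ (i * j) * q ^ (2 * (i : ℤ) * ((c : ℤ) - j) + 2 * ((k : ℤ) + 1) * l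
      + 2 * (m : ℤ) * ((m : ℤ) - k)) = (q ^ 2) ^ ((k + 1) * l + (j - l) * m + c * (i - m)) := by
    rw [← pow_mul, ← pow_mul, ← zpow_natCast, ← zpow_natCast, ← zpow_add₀ q_ne_zero]
    congr 1
    push_cast [Nat.cast_sub hi, Nat.cast_sub hj]
    have hk : (k : ℤ) = c + m + l - j := by lia
    rw [hk]
    ring
  rw [hc, Nat.add_sub_cancel, ← pow_mul_zpow]
  ring

theorem Scoef_eq_opS_apply (a b c i j k : ℕ) :
    Scoef a b c i j k = opS (q ^ 2) (ket3 i j k) (a, b, c) := by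
  refine mul_left_cancel₀ (pow_ne_zero (i * j) (pow_ne_zero 2 q_ne_zero)) ?_
  rw [pow_mul_opS_ket3_apply, Scoef, ite_zero_mul_ite_zero, one_mul,
    Finset.Nat.sum_antidiagonal_eq_sum_range_succ_mk]
  split_ifs with conservation
  · rw [one_mul, Finset.mul_sum]
    refine Finset.sum_congr rfl fun m hm => ?_
    have hm : m ≤ b := Finset.mem_range_succ_iff.mp hm
    have hjk : j + k = m + (b - m) + c := by lia
    rw [← pow_mul_Scoef_summand hjk, Nat.cast_sub hm]
  · simp

theorem Scoef_involution_general {R : Type*} [CommRing R] (t : R) (a b c i j k : ℕ) :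
    ∑ᶠ (x : ℕ) (y : ℕ) (z : ℕ), opS t (ket3 x y z) (a, b, c) * opS t (ket3 i j k) (x, y, z) =
      if a = i ∧ b = j ∧ c = k then 1 else 0 := by
  rw [finsum_end_ket3_mul, ← Module.End.mul_apply, opS_mul_self, Module.End.one_apply, ket3_apply]

/-- 𝒮 is an involution. -/
theorem Scoef_involution :
    ∀ a b c i j k : ℕ,
      (∑ᶠ x : ℕ, ∑ᶠ y : ℕ, ∑ᶠ z : ℕ, Scoef a b c x y z * Scoef x y z i j k)
        = if a = i ∧ b = j ∧ c = k then 1 else 0 := by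
  intro a b c i j k
  simp only [Scoef_eq_opS_apply, Scoef_involution_general]
end
end
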